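/- Let λ=(λ_1,...,λ_l) be a partition of length l, let w̄_a = λ_a + l − a (so w̄_1>⋯>w̄_l≥0), let 0 ≤ k ≤ l−1, and let r_1,...,r_l be non-negative integers with Σ_{i=1}^l r_i = N_{λ,k}. Suppose the polynomial [w̄_1−r_1,...,w̄_l−r_l](t) evaluated at t = [x_1]+⋯+[x_k] is not identically zero. Then: (i) r_i = 0 for 1 ≤ i ≤ k; (ii) the sequence (w̄_{k+1}−r_{k+1}, ..., w̄_l−r_l) is a permutation of (l−k−1, ..., 1, 0); (iii) [w̄_1−r_1,...,w̄_l−r_l]([x_1]+⋯+[x_k]) = ± s_{(λ_1,...,λ_k)}([x_1]+⋯+[x_k]). -/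

import Mathlib

open MvPolynomial

/-- The polynomial `p_n(t)` defined by `exp(Σ_{n≥1} t_n k^n) = Σ_{n≥0} p_n(t) k^n`,
as a polynomial in the variables `t_1, t_2, ...` (variable `X n` stands for `t_n`). -/
noncomputable def pS (n : ℕ) : MvPolynomial ℕ ℚ :=
  ∑ m ∈ Finset.range (n + 1), (Nat.factorial m : ℚ)⁻¹ •
    ∑ c ∈ Finset.univ.filter
        (fun c : Fin m → Fin (n + 1) =>
          (∑ j, ((c j : ℕ))) = n ∧ ∀ j, 1 ≤ (c j : ℕ)),
      ∏ j, X ((c j : ℕ))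

/-- `p_n` for `n : ℤ`, with `p_n = 0` for `n < 0`. -/
noncomputable def pz (n : ℤ) : MvPolynomial ℕ ℚ :=
  if 0 ≤ n then pS n.toNat else 0

/-- The Schur function `s_λ(t) = det(p_{λ_i - i + j})_{1 ≤ i,j ≤ l}` (here `0`-indexed). -/
noncomputable def schur {l : ℕ} (lam : Fin l → ℕ) : MvPolynomial ℕ ℚ :=
  Matrix.det (Matrix.of fun a b : Fin l =>
    pz ((lam a : ℤ) - ((a : ℕ) : ℤ) + ((b : ℕ) : ℤ)))

/-- Substitution `t_n ↦ (x_1^n + ⋯ + x_k^n)/n`, i.e. `t = [x_1] + ⋯ + [x_k]`. -/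
noncomputable def toPowerSums (k : ℕ) (f : MvPolynomial ℕ ℚ) : MvPolynomial (Fin k) ℚ :=
  aeval (fun n : ℕ => (n : ℚ)⁻¹ • ∑ i : Fin k, X i ^ n) f

/-- Iterated partial derivative `∂_{i_1} ⋯ ∂_{i_r}` for a list `L = [i_1, ..., i_r]`. -/
noncomputable def derivs (L : List ℕ) (f : MvPolynomial ℕ ℚ) : MvPolynomial ℕ ℚ :=
  L.foldr (fun i g => pderiv i g) f

/-- The entries of a partition `λ` padded by zeros (`0`-indexed). -/
def pad {l : ℕ} (lam : Fin l → ℕ) (a : ℕ) : ℕ := if h : a < l then lam ⟨a, h⟩ else 0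

/-- The symbol `[i_1, ..., i_l] = det(p_{i_a - l + b})_{1 ≤ a,b ≤ l}` (here 0-indexed:
row `a`, column `b` entry is `p_{w a - l + b + 1}`). -/
noncomputable def bracket {l : ℕ} (w : Fin l → ℤ) : MvPolynomial ℕ ℚ :=
  Matrix.det (Matrix.of fun a b : Fin l =>
    pz (w a - (l : ℤ) + ((b : ℕ) : ℤ) + 1))

/-!
At `t = [x₁] + ⋯ + [x_k]` the generating series of the `p_n` becomes `∏ᵢ (1 - xᵢ z)⁻¹`.
Multiplying by the polynomial `∏ᵢ (1 - xᵢ z)`, of degree `k`, is a unimodular column operation on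
the matrix of `[w₁, …, w_l]` which turns every column past the `k`-th into a column of Kronecker
deltas. If the determinant is nonzero, some permutation `σ` therefore satisfies
`w_{σ(b)} = l - b` for all `b > k` (1-indexed).

Apply this to `w_a = w̄_a - r_a`. Since `∑ r_a = λ_{k+1} + ⋯ + λ_l`, the remaining `k` entries
`w_{σ(1)}, …, w_{σ(k)}` add up to `w̄_1 + ⋯ + w̄_k`. As `w̄` is strictly decreasing and `r ≥ 0`,
this forces `σ` to preserve `{1, …, k}` and `r` to vanish there. Up to sign the symbol is then
`[w̄_1, …, w̄_k, l-k-1, …, 1, 0]`, whose matrix is block triangular with a unitriangular last block,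
so it equals `s_{(λ_1, …, λ_k)}` even before `t` is specialised.
-/

lemma pS_zero : pS 0 = 1 := by simp [pS]

lemma pz_of_neg {n : ℤ} (hn : n < 0) : pz n = 0 := if_neg hn.not_ge

lemma pz_natCast (n : ℕ) : pz n = pS n := by simp [pz]

lemma pz_zero : pz 0 = 1 := by simpa [pS_zero] using pz_natCast 0

section ExpSubst

lemma coeff_pow_eq_sum_fin {R : Type*} [CommSemiring R] (f : PowerSeries R) (m n : ℕ) :
    PowerSeries.coeff n (f ^ m) =
      ∑ c : Fin m → Fin (n + 1) with ∑ j, (c j : ℕ) = n,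
        ∏ j, PowerSeries.coeff (c j : ℕ) f := by
  have htrunc : PowerSeries.trunc (n + 1) f =
      ∑ i : Fin (n + 1), Polynomial.monomial (i : ℕ) (PowerSeries.coeff (i : ℕ) f) := by
    rw [PowerSeries.trunc_apply, Nat.Ico_zero_eq_range,
      Fin.sum_univ_eq_sum_range fun i => Polynomial.monomial i (PowerSeries.coeff i f)]
  have hmonomial (c : Fin m → Fin (n + 1)) :
      ∏ j, Polynomial.monomial (c j : ℕ) (PowerSeries.coeff (c j : ℕ) f) =
        Polynomial.monomial (∑ j, (c j : ℕ)) (∏ j, PowerSeries.coeff (c j : ℕ) f) := by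
    simp only [← Polynomial.C_mul_X_pow_eq_monomial, Finset.prod_mul_distrib,
      Finset.prod_pow_eq_pow_sum, map_prod]
  calc PowerSeries.coeff n (f ^ m)
      = ((PowerSeries.trunc (n + 1) f) ^ m).coeff n := by
        rw [← PowerSeries.coeff_coe_trunc_of_lt n.lt_succ_self, ← PowerSeries.trunc_trunc_pow,
          PowerSeries.coeff_coe_trunc_of_lt n.lt_succ_self, ← Polynomial.coe_pow,
          Polynomial.coeff_coe]
    _ = _ := by
        simp only [htrunc, Fintype.sum_pow, hmonomial, Polynomial.finsetSum_coeff,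
          Polynomial.coeff_monomial, Finset.sum_filter]

variable {R : Type*} [CommRing R] [Algebra ℚ R]

lemma aeval_coeff_pS {T : PowerSeries R} (hT : PowerSeries.constantCoeff T = 0) (n : ℕ) :
    aeval (fun i => PowerSeries.coeff i T) (pS n) =
      PowerSeries.coeff n ((PowerSeries.exp R).subst T) := by
  have hsupport : (Function.support fun m =>
      PowerSeries.coeff m (PowerSeries.exp R) • PowerSeries.coeff n (T ^ m)) ⊆
        Finset.range (n + 1) := by
    refine Function.support_subset_iff'.mpr fun m hm => ?_
    have hlt : n < m := by simpa using hm
    rw [PowerSeries.coeff_of_lt_order n ((Nat.cast_lt.mpr hlt).trans_le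
      (PowerSeries.le_order_pow_of_constantCoeff_eq_zero m hT)), smul_zero]
  have hzero {m : ℕ} (c : Fin m → Fin (n + 1))
      (hc : ∏ j, PowerSeries.coeff (c j : ℕ) T ≠ 0) (j : Fin m) : 1 ≤ (c j : ℕ) := by
    rw [Nat.one_le_iff_ne_zero]
    intro hj
    exact hc (Finset.prod_eq_zero (Finset.mem_univ j) (by simpa [hj] using hT))
  rw [PowerSeries.coeff_subst' (PowerSeries.HasSubst.of_constantCoeff_zero' hT),
    finsum_eq_sum_of_support_subset _ hsupport, pS, map_sum]
  refine Finset.sum_congr rfl fun m _ => ?_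
  simp only [map_smul, map_sum, map_prod, aeval_X, coeff_pow_eq_sum_fin, PowerSeries.coeff_exp,
    one_div, smul_eq_mul]
  rw [← Finset.filter_filter, Finset.sum_filter_of_ne fun c _ hc => hzero c hc, Algebra.smul_def]

end ExpSubst

section PowerSums

variable {ι R : Type*} [Fintype ι] [CommRing R]

/-- The polynomial `∏ᵢ (1 - xᵢ z)` in `z`, whose coefficients are the elementary symmetric
functions of the family `x` up to sign. -/
noncomputable def signedEsymmPoly (x : ι → R) : Polynomial R :=
  ∏ i, (1 - Polynomial.C (x i) * Polynomial.X)

lemma natDegree_signedEsymmPoly_le (x : ι → R) :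
    (signedEsymmPoly x).natDegree ≤ Fintype.card ι := by
  calc (signedEsymmPoly x).natDegree
      ≤ ∑ i, (1 - Polynomial.C (x i) * Polynomial.X : Polynomial R).natDegree :=
        Polynomial.natDegree_prod_le _ _
    _ ≤ ∑ _i : ι, 1 := Finset.sum_le_sum fun i _ => by compute_degree
    _ = Fintype.card ι := by simp

lemma coeff_zero_signedEsymmPoly (x : ι → R) : (signedEsymmPoly x).coeff 0 = 1 := by
  simp [signedEsymmPoly, Polynomial.coeff_zero_prod]

lemma one_sub_C_mul_X_mul_mk_pow (a : R) :
    ((1 - Polynomial.C a * Polynomial.X : Polynomial R) : PowerSeries R) *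
      PowerSeries.mk (fun n => a ^ n) = 1 := by
  ext n
  cases n with
  | zero => simp
  | succ n => simp [sub_mul, mul_assoc, pow_succ', PowerSeries.coeff_one]

lemma derivative_signedEsymmPoly (x : ι → R) :
    PowerSeries.derivative R (signedEsymmPoly x : PowerSeries R) =
      -((signedEsymmPoly x : PowerSeries R) *
        PowerSeries.mk fun n => ∑ i, x i ^ (n + 1)) := by
  classical
  have hmk : (PowerSeries.mk fun n => ∑ i, x i ^ (n + 1)) =
      ∑ i, PowerSeries.C (x i) * PowerSeries.mk fun n => x i ^ n := by
    ext n
    simp [pow_succ']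
  have hfactor (i : ι) : signedEsymmPoly x =
      (∏ j ∈ Finset.univ.erase i, (1 - Polynomial.C (x j) * Polynomial.X)) *
        (1 - Polynomial.C (x i) * Polynomial.X) :=
    (Finset.prod_erase_mul _ _ (Finset.mem_univ i)).symm
  rw [hmk, Finset.mul_sum, ← Finset.sum_neg_distrib, PowerSeries.derivative_coe]
  conv_lhs => rw [signedEsymmPoly, Polynomial.derivative_prod_finset,
    ← Polynomial.coeToPowerSeries.ringHom_apply, map_sum]
  refine Finset.sum_congr rfl fun i _ => ?_
  rw [Polynomial.coeToPowerSeries.ringHom_apply, hfactor i, Polynomial.coe_mul, Polynomial.coe_mul]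
  simp only [Polynomial.derivative_sub, Polynomial.derivative_one, Polynomial.derivative_C_mul,
    Polynomial.derivative_X, mul_one, zero_sub, Polynomial.coe_neg, Polynomial.coe_C]
  linear_combination ((∏ j ∈ Finset.univ.erase i, (1 - Polynomial.C (x j) * Polynomial.X) :
    Polynomial R) : PowerSeries R) * PowerSeries.C (x i) * one_sub_C_mul_X_mul_mk_pow (x i)

variable [Algebra ℚ R]

/-- The series `∑ₙ (∑ᵢ xᵢⁿ) zⁿ / n`; its constant term is `0` because `0⁻¹ = 0`. -/
noncomputable def powerSumSeries (x : ι → R) : PowerSeries R :=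
  PowerSeries.mk fun n => (n : ℚ)⁻¹ • ∑ i, x i ^ n

/-- The substitution `t = ∑ᵢ [xᵢ]` for a finite family `x` in a `ℚ`-algebra. -/
noncomputable def powerSumEval (x : ι → R) : MvPolynomial ℕ ℚ →ₐ[ℚ] R :=
  aeval fun n => PowerSeries.coeff n (powerSumSeries x)

lemma toPowerSums_eq_powerSumEval (k : ℕ) (f : MvPolynomial ℕ ℚ) :
    toPowerSums k f = powerSumEval (X : Fin k → MvPolynomial (Fin k) ℚ) f := by
  simp [toPowerSums, powerSumEval, powerSumSeries]

lemma derivative_powerSumSeries (x : ι → R) :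
    PowerSeries.derivative R (powerSumSeries x) =
      PowerSeries.mk fun n => ∑ i, x i ^ (n + 1) := by
  ext n
  have hunit : ((n + 1 : ℕ) : ℚ) ≠ 0 := by positivity
  have hcast : (n : R) + 1 = algebraMap ℚ R (n + 1 : ℕ) := by simp
  rw [PowerSeries.coeff_derivative, powerSumSeries, PowerSeries.coeff_mk, PowerSeries.coeff_mk,
    hcast, mul_comm, ← Algebra.smul_def, smul_inv_smul₀ hunit]

lemma signedEsymmPoly_mul_mk_powerSumEval (x : ι → R) :
    (signedEsymmPoly x : PowerSeries R) *
      PowerSeries.mk (fun n => powerSumEval x (pS n)) = 1 := by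
  have : IsAddTorsionFree R := .of_module_rat R
  have hzero : PowerSeries.constantCoeff (powerSumSeries x) = 0 := by simp [powerSumSeries]
  have hexp : PowerSeries.mk (fun n => powerSumEval x (pS n)) =
      (PowerSeries.exp R).subst (powerSumSeries x) := by
    ext n
    rw [PowerSeries.coeff_mk, powerSumEval, aeval_coeff_pS hzero]
  refine PowerSeries.derivative.ext ?_ ?_
  · rw [Derivation.leibniz, hexp,
      PowerSeries.derivative_subst (PowerSeries.HasSubst.of_constantCoeff_zero' hzero),
      PowerSeries.derivative_exp, derivative_powerSumSeries, derivative_signedEsymmPoly,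
      smul_eq_mul, smul_eq_mul, PowerSeries.derivative_one]
    ring
  · rw [map_mul, map_one, ← PowerSeries.coeff_zero_eq_constantCoeff_apply, Polynomial.coeff_coe,
      coeff_zero_signedEsymmPoly, ← PowerSeries.coeff_zero_eq_constantCoeff_apply,
      PowerSeries.coeff_mk]
    simp [pS_zero]

lemma sum_coeff_signedEsymmPoly_mul_powerSumEval_pz (x : ι → R) (n : ℤ) {m : ℕ}
    (hm : Fintype.card ι ≤ m) :
    ∑ i ∈ Finset.range (m + 1), (signedEsymmPoly x).coeff i * powerSumEval x (pz (n - i)) =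
      if n = 0 then 1 else 0 := by
  rcases lt_or_ge n 0 with hn | hn
  · rw [if_neg hn.ne]
    exact Finset.sum_eq_zero fun i _ => by rw [pz_of_neg (by lia), map_zero, mul_zero]
  lift n to ℕ using hn
  have hcoeff := congrArg (PowerSeries.coeff n) (signedEsymmPoly_mul_mk_powerSumEval x)
  rw [Polynomial.as_sum_range_C_mul_X_pow' _
      (Nat.lt_succ_of_le ((natDegree_signedEsymmPoly_le x).trans hm)),
    ← Polynomial.coeToPowerSeries.ringHom_apply, map_sum, Finset.sum_mul, map_sum,
    PowerSeries.coeff_one] at hcoeff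
  rw [← Nat.cast_zero, if_congr Nat.cast_inj rfl rfl, ← hcoeff]
  refine Finset.sum_congr rfl fun i _ => ?_
  rw [Polynomial.coeToPowerSeries.ringHom_apply, Polynomial.coe_mul, Polynomial.coe_C,
    Polynomial.coe_pow, Polynomial.coe_X, mul_assoc, PowerSeries.coeff_C_mul,
    PowerSeries.coeff_X_pow_mul']
  split_ifs with hi
  · rw [PowerSeries.coeff_mk, ← Nat.cast_sub hi, pz_natCast]
  · rw [pz_of_neg (by lia), map_zero]

end PowerSums

section Bracket

variable {k l : ℕ}

/-- The matrix whose determinant is the symbol `[w₁, …, w_l]`. -/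
noncomputable def bracketMatrix (w : Fin l → ℤ) : Matrix (Fin l) (Fin l) (MvPolynomial ℕ ℚ) :=
  Matrix.of fun a b => pz (w a - (l : ℤ) + ((b : ℕ) : ℤ) + 1)

lemma bracketMatrix_apply (w : Fin l → ℤ) (a b : Fin l) :
    bracketMatrix w a b = pz (w a - (l : ℤ) + ((b : ℕ) : ℤ) + 1) :=
  rfl

lemma bracket_eq_det (w : Fin l → ℤ) : bracket w = (bracketMatrix w).det :=
  rfl

lemma schur_eq_bracket (lam : Fin l → ℕ) :
    schur lam = bracket fun a => (lam a : ℤ) + l - 1 - ((a : ℕ) : ℤ) := by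
  refine congrArg Matrix.det (Matrix.ext fun a b => congrArg pz ?_)
  ring

lemma bracket_comp_perm (w : Fin l → ℤ) (σ : Equiv.Perm (Fin l)) :
    bracket (w ∘ σ) = ((Equiv.Perm.sign σ : ℤ) : MvPolynomial ℕ ℚ) * bracket w :=
  Matrix.det_permute σ (bracketMatrix w)

lemma bracket_eq_or_eq_neg_of_perm (w : Fin l → ℤ) (σ : Equiv.Perm (Fin l)) :
    bracket w = bracket (w ∘ σ) ∨ bracket w = -bracket (w ∘ σ) := by
  rcases Int.units_eq_one_or (Equiv.Perm.sign σ) with h | h <;> simp [bracket_comp_perm, h]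

lemma bracket_eq_of_forall_ge (hkl : k ≤ l) {w : Fin l → ℤ}
    (hw : ∀ b : Fin l, k ≤ (b : ℕ) → w b = (l : ℤ) - 1 - ((b : ℕ) : ℤ)) :
    bracket w = bracket fun a : Fin k => w (Fin.castLE hkl a) - ((l : ℤ) - k) := by
  have hhead : (Matrix.toSquareBlockProp (bracketMatrix w) fun a => (a : ℕ) < k).det =
      bracket fun a : Fin k => w (Fin.castLE hkl a) - ((l : ℤ) - k) := by
    rw [bracket, ← Matrix.det_submatrix_equiv_self (Fin.castLEquiv hkl)]
    refine congrArg Matrix.det (Matrix.ext fun a b => congrArg pz ?_)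
    rw [sub_sub, sub_add_cancel]
    rfl
  have htail : (Matrix.toSquareBlockProp (bracketMatrix w) fun a => ¬(a : ℕ) < k).det = 1 := by
    rw [Matrix.det_of_isUpperTriangular]
    · refine Finset.prod_eq_one fun b _ => ?_
      rw [Matrix.toSquareBlockProp_def, Matrix.of_apply, bracketMatrix_apply,
        hw b (not_lt.mp b.2), ← pz_zero]
      congr 1
      ring
    · intro a b hba
      have hlt : ((b : Fin l) : ℕ) < (a : Fin l) := hba
      rw [Matrix.toSquareBlockProp_def, Matrix.of_apply, bracketMatrix_apply,
        hw a (not_lt.mp a.2)]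
      exact pz_of_neg (by lia)
  rw [bracket_eq_det, Matrix.twoBlockTriangular_det _ (fun a : Fin l => (a : ℕ) < k), hhead,
    htail, mul_one]
  intro a ha b hb
  rw [bracketMatrix_apply, hw a (not_lt.mp ha)]
  exact pz_of_neg (by lia)

lemma bracket_eq_or_eq_neg_of_perm_forall_ge (hkl : k ≤ l) {w : Fin l → ℤ}
    {σ : Equiv.Perm (Fin l)}
    (hw : ∀ b : Fin l, k ≤ (b : ℕ) → w (σ b) = (l : ℤ) - 1 - ((b : ℕ) : ℤ))
    (hσ : ∀ b : Fin l, (σ b : ℕ) < k ↔ (b : ℕ) < k) :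
    bracket w = bracket (fun a : Fin k => w (Fin.castLE hkl a) - ((l : ℤ) - k)) ∨
      bracket w = -bracket fun a : Fin k => w (Fin.castLE hkl a) - ((l : ℤ) - k) := by
  let τ : Equiv.Perm (Fin l) :=
    Equiv.Perm.ofSubtype (p := fun a : Fin l => k ≤ (a : ℕ))
      (σ.subtypePerm fun b => by simpa using not_congr (hσ b))
  have hτ_lt (a : Fin k) : τ (Fin.castLE hkl a) = Fin.castLE hkl a :=
    Equiv.Perm.ofSubtype_apply_of_not_mem _ (not_le.mpr a.2)
  have hτ_ge (b : Fin l) (hb : k ≤ (b : ℕ)) : τ b = σ b :=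
    Equiv.Perm.ofSubtype_apply_of_mem (p := fun a : Fin l => k ≤ (a : ℕ)) _ hb
  have htail (b : Fin l) (hb : k ≤ (b : ℕ)) : (w ∘ τ) b = (l : ℤ) - 1 - ((b : ℕ) : ℤ) := by
    rw [Function.comp_apply, hτ_ge b hb, hw b hb]
  simpa only [bracket_eq_of_forall_ge hkl htail, Function.comp_apply, hτ_lt] using
    bracket_eq_or_eq_neg_of_perm w τ

end Bracket

section ColumnReduction

variable {ι R : Type*} [CommRing R] {l : ℕ}

/-- The `l × l` upper triangular Toeplitz matrix with entries `p_{b - c}` for the coefficients of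
`p`: column operations by it turn a row `(h_{n + c})_c` into a convolution of `h` with `p`. -/
def upperToeplitz (p : Polynomial R) (l : ℕ) : Matrix (Fin l) (Fin l) R :=
  Matrix.of fun c b => if c ≤ b then p.coeff ((b : ℕ) - c) else 0

lemma det_upperToeplitz (p : Polynomial R) (l : ℕ) :
    (upperToeplitz p l).det = p.coeff 0 ^ l := by
  rw [Matrix.det_of_isUpperTriangular]
  · simp [upperToeplitz]
  · exact fun c b hbc => if_neg (not_le.mpr hbc)

variable [Fintype ι] [Algebra ℚ R]

lemma sum_powerSumEval_pz_mul_upperToeplitz (x : ι → R) (n : ℤ) {b : Fin l}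
    (hb : Fintype.card ι ≤ b) :
    ∑ c : Fin l, powerSumEval x (pz (n + ((c : ℕ) : ℤ))) *
        upperToeplitz (signedEsymmPoly x) l c b =
      if n + ((b : ℕ) : ℤ) = 0 then 1 else 0 := by
  let f (c : ℕ) : R := powerSumEval x (pz (n + c)) *
    if c ≤ b then (signedEsymmPoly x).coeff (b - c) else 0
  calc ∑ c : Fin l, powerSumEval x (pz (n + ((c : ℕ) : ℤ))) *
        upperToeplitz (signedEsymmPoly x) l c b
      = ∑ c ∈ Finset.range l, f c := Fin.sum_univ_eq_sum_range f l
    _ = ∑ c ∈ Finset.range (b + 1), f c := by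
        refine (Finset.sum_subset (Finset.range_subset_range.mpr b.2) fun c _ hc => ?_).symm
        rw [Finset.mem_range] at hc
        simp only [f, if_neg (show ¬c ≤ (b : ℕ) by lia), mul_zero]
    _ = ∑ i ∈ Finset.range (b + 1), f (b - i) := by
        simpa using (Finset.sum_range_reflect f (b + 1)).symm
    _ = ∑ i ∈ Finset.range (b + 1), (signedEsymmPoly x).coeff i *
          powerSumEval x (pz (n + ((b : ℕ) : ℤ) - i)) := by
        refine Finset.sum_congr rfl fun i hi => ?_
        have hib : i ≤ (b : ℕ) := Finset.mem_range_succ_iff.mp hi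
        simp only [f, if_pos (Nat.sub_le _ _), Nat.sub_sub_self hib, Nat.cast_sub hib,
          add_sub_assoc, mul_comm]
    _ = _ := sum_coeff_signedEsymmPoly_mul_powerSumEval_pz x _ hb

lemma exists_perm_of_powerSumEval_bracket_ne_zero {x : ι → R} {w : Fin l → ℤ}
    (h : powerSumEval x (bracket w) ≠ 0) :
    ∃ σ : Equiv.Perm (Fin l), ∀ b : Fin l, Fintype.card ι ≤ (b : ℕ) →
      w (σ b) = (l : ℤ) - 1 - ((b : ℕ) : ℤ) := by
  let M := (bracketMatrix w).map (powerSumEval x)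
  let N : Matrix (Fin l) (Fin l) R := M * upperToeplitz (signedEsymmPoly x) l
  have hN : N.det = powerSumEval x (bracket w) := by
    rw [Matrix.det_mul, det_upperToeplitz, coeff_zero_signedEsymmPoly, one_pow, mul_one,
      bracket_eq_det, AlgHom.map_det]
    rfl
  have hentry (a b : Fin l) (hb : Fintype.card ι ≤ (b : ℕ)) :
      N a b = if w a - l + 1 + ((b : ℕ) : ℤ) = 0 then 1 else 0 := by
    rw [← sum_powerSumEval_pz_mul_upperToeplitz x _ hb]
    simp only [N, M, Matrix.mul_apply, Matrix.map_apply, bracketMatrix_apply, add_right_comm]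
  rw [← hN, Matrix.det_apply] at h
  obtain ⟨σ, -, hσ⟩ := Finset.exists_ne_zero_of_sum_ne_zero h
  refine ⟨σ, fun b hb => ?_⟩
  by_contra hw
  have hzero : N (σ b) b = 0 := by rw [hentry _ _ hb, if_neg (by lia)]
  have hprod : ∏ i, N (σ i) i = 0 := Finset.prod_eq_zero (Finset.mem_univ b) hzero
  exact hσ (by rw [hprod, smul_zero])

end ColumnReduction

section Selection

variable {α M : Type*} [AddCommGroup M] [LinearOrder M] [IsOrderedAddMonoid M]

lemma sum_lt_sum_of_card_eq_of_forall_lt {s t : Finset α} {v : α → M}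
    (hcard : t.card = s.card) (hne : t ≠ s) (hv : ∀ a ∈ s, ∀ b ∉ s, v b < v a) :
    ∑ b ∈ t, v b < ∑ a ∈ s, v a := by
  classical
  have hcard' : (t \ s).card = (s \ t).card := Finset.card_sdiff_comm hcard
  have hnonempty : (t \ s).Nonempty := by
    rw [Finset.sdiff_nonempty]
    exact fun hsub => hne (Finset.eq_of_subset_of_card_le hsub hcard.ge)
  let e : ↥(t \ s) ≃ ↥(s \ t) := Finset.equivOfCardEq hcard'
  have hlt : ∑ b ∈ t \ s, v b < ∑ a ∈ s \ t, v a := by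
    rw [← Finset.sum_coe_sort, ← Finset.sum_coe_sort (s \ t), ← e.sum_comp]
    have := hnonempty.to_subtype
    refine Finset.sum_lt_sum_of_nonempty Finset.univ_nonempty fun b _ => ?_
    exact hv _ (Finset.mem_sdiff.mp (e b).2).1 _ (Finset.mem_sdiff.mp b.2).2
  rw [← Finset.sum_inter_add_sum_sdiff t s, ← Finset.sum_inter_add_sum_sdiff s t, Finset.inter_comm]
  gcongr

lemma map_perm_eq_and_eq_zero_of_sum_eq [Fintype α] [DecidableEq α] {s : Finset α} {v r : α → M}
    (hv : ∀ a ∈ s, ∀ b ∉ s, v b < v a) (hr_nonneg : ∀ a, 0 ≤ r a) {σ : Equiv.Perm α}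
    (hr : ∑ a, r a = ∑ b ∈ sᶜ, (v b - (v (σ b) - r (σ b)))) :
    s.map σ.toEmbedding = s ∧ ∀ a ∈ s, r a = 0 := by
  have hsum : ∑ a ∈ s.map σ.toEmbedding, (v a - r a) = ∑ a ∈ s, v a := by
    rw [Finset.sum_map, ← add_left_inj (∑ b ∈ sᶜ, (v (σ b) - r (σ b)))]
    calc ∑ b ∈ s, (v (σ b) - r (σ b)) + ∑ b ∈ sᶜ, (v (σ b) - r (σ b))
        = ∑ b, (v (σ b) - r (σ b)) := Finset.sum_add_sum_compl s _
      _ = ∑ a, v a - ∑ a, r a := by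
          rw [Equiv.sum_comp σ fun a => v a - r a, Finset.sum_sub_distrib]
      _ = ∑ a ∈ s, v a + ∑ b ∈ sᶜ, (v (σ b) - r (σ b)) := by
          rw [hr, ← Finset.sum_add_sum_compl s v, Finset.sum_sub_distrib v]
          abel
  have hmap : s.map σ.toEmbedding = s := by
    by_contra hne
    have hlt := sum_lt_sum_of_card_eq_of_forall_lt (Finset.card_map _) hne hv
    rw [← hsum] at hlt
    exact hlt.not_ge (Finset.sum_le_sum fun a _ => sub_le_self _ (hr_nonneg a))
  rw [hmap, Finset.sum_sub_distrib, sub_eq_self,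
    Finset.sum_eq_zero_iff_of_nonneg fun a _ => hr_nonneg a] at hsum
  exact ⟨hmap, hsum⟩

end Selection

section Partition

variable {k l : ℕ}

lemma strictAnti_add_sub_of_antitone {lam : Fin l → ℕ} (hlam : Antitone lam) :
    StrictAnti fun a : Fin l => (lam a : ℤ) + l - 1 - ((a : ℕ) : ℤ) := by
  intro a b hab
  have hle : lam b ≤ lam a := hlam hab.le
  rw [Fin.lt_def] at hab
  dsimp only
  lia

lemma sum_Ico_pad (lam : Fin l → ℕ) (k : ℕ) :
    ∑ a ∈ Finset.Ico k l, pad lam a = ∑ a ∈ {a : Fin l | k ≤ (a : ℕ)}, lam a := by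
  have hpad (a : Fin l) : lam a = pad lam a := by simp [pad]
  simp only [hpad]
  refine Eq.trans ?_ (Finset.sum_map _ Fin.valEmbedding (pad lam))
  congr 1
  ext n
  simp only [Finset.mem_Ico, Finset.mem_map, Finset.mem_filter_univ, Fin.valEmbedding_apply]
  exact ⟨fun h => ⟨⟨n, h.2⟩, h.1, rfl⟩, by rintro ⟨a, ha, rfl⟩; exact ⟨ha, a.2⟩⟩

lemma image_filter_ge_eq_image_range {w : Fin l → ℤ} {σ : Equiv.Perm (Fin l)}
    (hw : ∀ b : Fin l, k ≤ (b : ℕ) → w (σ b) = (l : ℤ) - 1 - ((b : ℕ) : ℤ))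
    (hσ : ∀ b : Fin l, (σ b : ℕ) < k ↔ (b : ℕ) < k) :
    Finset.image w (Finset.univ.filter fun a : Fin l => k ≤ (a : ℕ)) =
      Finset.image (fun n : ℕ => (n : ℤ)) (Finset.range (l - k)) := by
  ext z
  simp only [Finset.mem_image, Finset.mem_filter_univ, Finset.mem_range]
  constructor
  · rintro ⟨a, ha, rfl⟩
    obtain ⟨b, rfl⟩ := σ.surjective a
    have hb : k ≤ (b : ℕ) := by simpa using (not_congr (hσ b)).mp (not_lt.mpr ha)
    exact ⟨l - 1 - b, by lia, by rw [hw b hb]; lia⟩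
  · rintro ⟨n, hn, rfl⟩
    let b : Fin l := ⟨l - 1 - n, by lia⟩
    have hb : k ≤ (b : ℕ) := by dsimp only [b]; lia
    refine ⟨σ b, not_lt.mp (mt (hσ b).mp (not_lt.mpr hb)), ?_⟩
    rw [hw b hb]
    dsimp only [b]
    lia

lemma perm_lt_iff_and_eq_zero_of_sum_eq {lam r : Fin l → ℕ} (hlam : Antitone lam)
    (hr : ∑ a, r a = ∑ a ∈ {a : Fin l | k ≤ (a : ℕ)}, lam a) {σ : Equiv.Perm (Fin l)}
    (hσ : ∀ b : Fin l, k ≤ (b : ℕ) →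
      (lam (σ b) : ℤ) + l - 1 - ((σ b : ℕ) : ℤ) - r (σ b) = (l : ℤ) - 1 - ((b : ℕ) : ℤ)) :
    (∀ b : Fin l, (σ b : ℕ) < k ↔ (b : ℕ) < k) ∧ ∀ a : Fin l, (a : ℕ) < k → r a = 0 := by
  let s : Finset (Fin l) := {a | (a : ℕ) < k}
  have hv : ∀ a ∈ s, ∀ b ∉ s,
      (lam b : ℤ) + l - 1 - ((b : ℕ) : ℤ) < (lam a : ℤ) + l - 1 - ((a : ℕ) : ℤ) := by
    intro a ha b hb
    simp only [s, Finset.mem_filter_univ, not_lt] at ha hb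
    exact strictAnti_add_sub_of_antitone hlam (Fin.lt_def.mpr (ha.trans_le hb))
  have hsum : ∑ a, (r a : ℤ) = ∑ b ∈ sᶜ, ((lam b : ℤ) + l - 1 - ((b : ℕ) : ℤ) -
      ((lam (σ b) : ℤ) + l - 1 - ((σ b : ℕ) : ℤ) - r (σ b))) := by
    rw [← Nat.cast_sum, hr, Nat.cast_sum]
    simp only [s, Finset.compl_filter, not_lt]
    refine Finset.sum_congr rfl fun b hb => ?_
    rw [hσ b (Finset.mem_filter_univ b |>.mp hb)]
    ring
  obtain ⟨hmap, hzero⟩ :=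
    map_perm_eq_and_eq_zero_of_sum_eq hv (fun a => Int.natCast_nonneg (r a)) hsum
  constructor
  · intro b
    simpa [s] using Finset.ext_iff.mp hmap (σ b) |>.symm
  · intro a ha
    exact_mod_cast hzero a (by simpa [s] using ha)

lemma bracket_castLE_eq_schur (hkl : k ≤ l) {lam r : Fin l → ℕ}
    (hr : ∀ a : Fin l, (a : ℕ) < k → r a = 0) :
    (bracket fun a : Fin k => (lam (Fin.castLE hkl a) : ℤ) + l - 1 -
        ((Fin.castLE hkl a : ℕ) : ℤ) - r (Fin.castLE hkl a) - ((l : ℤ) - k)) =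
      schur fun a : Fin k => pad lam a := by
  rw [schur_eq_bracket]
  congr 1
  ext a
  have ha : (a : ℕ) < l := a.2.trans_le hkl
  rw [hr _ a.2, pad, dif_pos ha]
  simp only [Fin.castLE, Nat.cast_zero]
  ring

end Partition

theorem statement6_general {ι R : Type*} [Fintype ι] [CommRing R] [Algebra ℚ R] {k l : ℕ}
    (hkl : k ≤ l) {lam : Fin l → ℕ} (hanti : Antitone lam) {r : Fin l → ℕ}
    (hr : ∑ a, r a = ∑ a ∈ Finset.Ico k l, pad lam a) {x : ι → R} (hx : Fintype.card ι ≤ k)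
    (hnz : powerSumEval x
      (bracket fun a => (lam a : ℤ) + l - 1 - ((a : ℕ) : ℤ) - (r a : ℤ)) ≠ 0) :
    (∀ a : Fin l, (a : ℕ) < k → r a = 0)
    ∧ Finset.image (fun a => (lam a : ℤ) + l - 1 - ((a : ℕ) : ℤ) - (r a : ℤ))
        (Finset.univ.filter fun a : Fin l => k ≤ (a : ℕ))
        = Finset.image (fun n : ℕ => (n : ℤ)) (Finset.range (l - k))
    ∧ ∃ ε : ℚ, (ε = 1 ∨ ε = -1) ∧
        (bracket fun a => (lam a : ℤ) + l - 1 - ((a : ℕ) : ℤ) - (r a : ℤ))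
          = ε • schur (fun a : Fin k => pad lam a) := by
  obtain ⟨σ, hσ_card⟩ := exists_perm_of_powerSumEval_bracket_ne_zero hnz
  have hσ := fun (b : Fin l) (hb : k ≤ (b : ℕ)) => hσ_card b (hx.trans hb)
  rw [sum_Ico_pad] at hr
  obtain ⟨hσ_lt, hr_zero⟩ := perm_lt_iff_and_eq_zero_of_sum_eq hanti hr hσ
  refine ⟨hr_zero, image_filter_ge_eq_image_range hσ hσ_lt, ?_⟩
  have hsign := bracket_eq_or_eq_neg_of_perm_forall_ge
    (w := fun a => (lam a : ℤ) + l - 1 - ((a : ℕ) : ℤ) - r a) hkl hσ hσ_lt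
  rw [bracket_castLE_eq_schur hkl hr_zero] at hsign
  rcases hsign with h | h
  · exact ⟨1, Or.inl rfl, by rw [h, one_smul]⟩
  · exact ⟨-1, Or.inr rfl, by rw [h, neg_one_smul]⟩

/-- Let `λ` be a partition of length `l`, `w̄_a = λ_a + l - a` (1-indexed),
`0 ≤ k ≤ l-1` and `r_1,...,r_l ≥ 0` with `Σ r_i = N_{λ,k}`. If
`[w̄_1 - r_1, ..., w̄_l - r_l]` evaluated at `t = [x_1]+⋯+[x_k]` is not identically zero, then:
(i) `r_a = 0` for `a ≤ k`; (ii) `(w̄_{k+1}-r_{k+1}, ..., w̄_l-r_l)` is a permutation of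
`(l-k-1, ..., 1, 0)`; (iii) the evaluation equals `± s_{(λ_1,...,λ_k)}([x_1]+⋯+[x_k])`. -/
theorem statement6 (l : ℕ) (lam : Fin l → ℕ)
    (hanti : Antitone lam) (hpos : ∀ i, 1 ≤ lam i)
    (k : ℕ) (hk : k + 1 ≤ l)
    (r : Fin l → ℕ)
    (hr : ∑ a, r a = ∑ a ∈ Finset.Ico k l, pad lam a)
    (hnz : toPowerSums k
        (bracket (fun a => ((lam a : ℤ) + l - 1 - ((a : ℕ) : ℤ)) - (r a : ℤ))) ≠ 0) :
    (∀ a : Fin l, (a : ℕ) < k → r a = 0)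
    ∧ Finset.image (fun a => ((lam a : ℤ) + l - 1 - ((a : ℕ) : ℤ)) - (r a : ℤ))
        (Finset.univ.filter (fun a : Fin l => k ≤ (a : ℕ)))
        = Finset.image (fun n : ℕ => (n : ℤ)) (Finset.range (l - k))
    ∧ ∃ ε : ℚ, (ε = 1 ∨ ε = -1) ∧
        toPowerSums k
            (bracket (fun a => ((lam a : ℤ) + l - 1 - ((a : ℕ) : ℤ)) - (r a : ℤ)))
          = ε • toPowerSums k (schur (fun a : Fin k => pad lam a)) := by
  rw [toPowerSums_eq_powerSumEval] at hnz
  obtain ⟨hr_zero, himage, ε, hε, hbracket⟩ :=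
    statement6_general (Nat.le_of_succ_le hk) hanti hr (Fintype.card_fin k).le hnz
  exact ⟨hr_zero, himage, ε, hε, by rw [hbracket, toPowerSums, map_smul, toPowerSums]⟩
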